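/- If V is a primitive linear subspace of the n×p matrices over F2 with upper rank 2, then n = 3 and p = 3. -/

import Mathlib

/-!
Choosing bases adapted to a hyperplane or to a line makes primitivity basis-free: every
hyperplane fails to contain the kernel of some map of rank two in the space, and every line fails
to be contained in the range of some such map.

Suppose first that the space contains a map `E ≠ 0` of rank one. Then all maps `f` induce maps
`ker E → W ⧸ range E` of rank at most one, and a space of such maps has a common range or a common
kernel of codimension one. Up to duality, some hyperplane `H` is therefore sent into a fixed plane
`P` by all maps. Pick `m` of rank two with `m H = P` and `m e = 0` for some `e ∉ H`. If `f e ∉ P`,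
then `f` and `f + m` are singular on `H`, so that `f` followed by a section of `m` has eigenvalues
`0` and `-1` on `P`, hence trace `-1`. By additivity of the trace the values `f e` span at most a
line modulo `P`, which bounds the codomain, while singularity forces `H ∩ ker m = 0`, which bounds
the domain.

Otherwise all nonzero maps have rank two. Their ranges are planes that meet pairwise without
having a line in common, so they lie in a three-dimensional space. The domain is handled dually.
-/

open Matrix

/-- Two linear subspaces of `n × p` matrices over `K` are *equivalent* when one is obtained
from the other by multiplying on the left and on the right by fixed invertible matrices. -/
def MatEquiv (K : Type*) [Field K] {n p : ℕ}
    (V₁ V₂ : Submodule K (Matrix (Fin n) (Fin p) K)) : Prop :=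
  ∃ (P : Matrix (Fin n) (Fin n) K) (Q : Matrix (Fin p) (Fin p) K),
    IsUnit P ∧ IsUnit Q ∧
      (V₂ : Set (Matrix (Fin n) (Fin p) K)) =
        (fun M => P * M * Q) '' (V₁ : Set (Matrix (Fin n) (Fin p) K))

/-- A linear subspace of matrices is *reduced* when no nonzero vector is annihilated by every
matrix of the space, and the column spaces of the matrices of the space together span the
whole target space. -/
def Reduced (K : Type*) [Field K] {n p : ℕ}
    (V : Submodule K (Matrix (Fin n) (Fin p) K)) : Prop :=
  (∀ x : Fin p → K, (∀ M ∈ V, M.mulVec x = 0) → x = 0) ∧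
  Submodule.span K {y : Fin n → K | ∃ M ∈ V, ∃ x : Fin p → K, M.mulVec x = y} = ⊤

/-- The *upper rank* of a linear subspace of matrices: the maximal rank of a matrix in it. -/
noncomputable def urk {K : Type*} [Field K] {n p : ℕ}
    (V : Submodule K (Matrix (Fin n) (Fin p) K)) : ℕ :=
  sSup (Matrix.rank '' (V : Set (Matrix (Fin n) (Fin p) K)))

/-- The matrix obtained by deleting the last column. -/
def dropCol {K : Type*} [Field K] {n p : ℕ} (M : Matrix (Fin n) (Fin p) K) :
    Matrix (Fin n) (Fin (p - 1)) K :=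
  M.submatrix id (Fin.castLE (Nat.sub_le p 1))

/-- The matrix obtained by deleting the last row. -/
def dropRow {K : Type*} [Field K] {n p : ℕ} (M : Matrix (Fin n) (Fin p) K) :
    Matrix (Fin (n - 1)) (Fin p) K :=
  M.submatrix (Fin.castLE (Nat.sub_le n 1)) id

/-- A linear subspace of matrices (of upper rank `r = urk V`) is *semi-primitive* when it is
reduced and it is not equivalent to a subspace `T` such that the space obtained by deleting
the last column of each matrix of `T` has upper rank at most `r - 1`. -/
def SemiPrimitive (K : Type*) [Field K] {n p : ℕ}
    (V : Submodule K (Matrix (Fin n) (Fin p) K)) : Prop :=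
  Reduced K V ∧
    ¬ ∃ T : Submodule K (Matrix (Fin n) (Fin p) K),
        MatEquiv K V T ∧ ∀ M ∈ T, (dropCol M).rank ≤ urk V - 1

/-- A linear subspace of matrices (of upper rank `r = urk V`) is *primitive* when it is
semi-primitive and it is not equivalent to a subspace `T` such that the space obtained by
deleting the last row of each matrix of `T` has upper rank at most `r - 1`. -/
def Primitive (K : Type*) [Field K] {n p : ℕ}
    (V : Submodule K (Matrix (Fin n) (Fin p) K)) : Prop :=
  SemiPrimitive K V ∧
    ¬ ∃ T : Submodule K (Matrix (Fin n) (Fin p) K),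
        MatEquiv K V T ∧ ∀ M ∈ T, (dropRow M).rank ≤ urk V - 1

section LinearMaps

open Module LinearMap Submodule

variable {K : Type*} [Field K] {U W : Type*} [AddCommGroup U] [Module K U] [AddCommGroup W]
  [Module K W]

theorem sup_eq_of_finrank_le_two [FiniteDimensional K W] {P X Y : Submodule K W}
    (hP : finrank K P ≤ 2) (hXP : X ≤ P) (hYP : Y ≤ P) (hX : X ≠ ⊥) (hY : Y ≠ ⊥)
    (hXY : Disjoint X Y) : X ⊔ Y = P := by
  refine eq_of_le_of_finrank_le (sup_le hXP hYP) ?_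
  have hsum := finrank_sup_add_finrank_inf_eq X Y
  rw [hXY.eq_bot, finrank_bot] at hsum
  have hX1 := one_le_finrank_iff.2 hX
  have hY1 := one_le_finrank_iff.2 hY
  omega

theorem exists_finrank_le_three_forall_le [FiniteDimensional K W] {𝒜 : Set (Submodule K W)}
    (hplane : ∀ P ∈ 𝒜, finrank K P = 2) (hmeet : ∀ P ∈ 𝒜, ∀ Q ∈ 𝒜, ¬ Disjoint P Q)
    (hcommon : ∀ L : Submodule K W, L ≠ ⊥ → ∃ P ∈ 𝒜, ¬ L ≤ P) :
    ∃ S : Submodule K W, finrank K S ≤ 3 ∧ ∀ P ∈ 𝒜, P ≤ S := by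
  rcases 𝒜.eq_empty_or_nonempty with rfl | ⟨A, hA⟩
  · exact ⟨⊥, by simp, by simp⟩
  obtain ⟨B, hB, hAB⟩ := hcommon A (one_le_finrank_iff.1 (by simp [hplane A hA]))
  have hdim := finrank_sup_add_finrank_inf_eq A B
  rw [hplane A hA, hplane B hB] at hdim
  have hline_pos := one_le_finrank_iff.2 (mt disjoint_iff.2 (hmeet A hA B hB))
  have hline_lt := finrank_lt_finrank_of_lt (inf_lt_left.2 hAB)
  rw [hplane A hA] at hline_lt
  have hline : IsAtom (A ⊓ B) := isAtom_iff_finrank_eq_one.2 (by omega)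
  have off_line : ∀ C ∈ 𝒜, ¬ A ⊓ B ≤ C → C ≤ A ⊔ B := by
    intro C hC hlC
    have hdisj : Disjoint (C ⊓ A) (C ⊓ B) := by
      rw [disjoint_iff, inf_inf_inf_comm, inf_idem, ← disjoint_iff, disjoint_comm]
      exact hline.not_le_iff_disjoint.1 hlC
    rw [← sup_eq_of_finrank_le_two (hplane C hC).le inf_le_left inf_le_left
      (mt disjoint_iff.2 (hmeet C hC A hA)) (mt disjoint_iff.2 (hmeet C hC B hB)) hdisj]
    exact sup_le_sup inf_le_right inf_le_right
  obtain ⟨C, hC, hlC⟩ := hcommon (A ⊓ B) hline.1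
  refine ⟨A ⊔ B, by omega, fun N hN => ?_⟩
  by_cases hlN : A ⊓ B ≤ N
  · have hdisj : Disjoint (A ⊓ B) (N ⊓ C) :=
      (hline.not_le_iff_disjoint.1 hlC).mono_right inf_le_right
    rw [← sup_eq_of_finrank_le_two (hplane N hN).le hlN inf_le_left hline.1
      (mt disjoint_iff.2 (hmeet N hN C hC)) hdisj]
    exact sup_le (inf_le_left.trans le_sup_left) (inf_le_right.trans (off_line C hC hlC))
  · exact off_line N hN hlN

theorem range_le_or_ker_le_of_finrank_le_one [FiniteDimensional K W] {f g : U →ₗ[K] W}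
    (hf0 : f ≠ 0) (hg : finrank K (range g) ≤ 1)
    (hfg : finrank K (range (f + g)) ≤ 1) : range g ≤ range f ∨ ker f ≤ ker g := by
  refine or_iff_not_imp_right.2 fun hker => ?_
  obtain ⟨y, hfy, hgy⟩ := SetLike.not_le_iff_exists.1 hker
  rw [mem_ker] at hfy hgy
  have span_eq {h : U →ₗ[K] W} (hh : finrank K (range h) ≤ 1) (hy : h y = g y) :
      K ∙ g y = range h := by
    refine eq_of_le_of_finrank_le ?_ (by rwa [finrank_span_singleton hgy])
    rw [span_singleton_le_iff_mem, ← hy]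
    exact mem_range_self h y
  have hrange : range f ≤ range g := by
    rintro _ ⟨x, rfl⟩
    have hx : (f + g) x ∈ range g := by
      rw [← span_eq hg rfl, span_eq hfg (by simp [hfy])]
      exact mem_range_self _ x
    exact (Submodule.add_mem_iff_left _ (mem_range_self g x)).1 hx
  exact (eq_of_le_of_finrank_le hrange
    (hg.trans (one_le_finrank_iff.2 (mt range_eq_bot.1 hf0)))).ge

theorem exists_common_range_or_ker [FiniteDimensional K U] [FiniteDimensional K W]
    {V : Submodule K (U →ₗ[K] W)} (hV : ∀ f ∈ V, finrank K (range f) ≤ 1) :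
    (∃ T : Submodule K W, finrank K T ≤ 1 ∧ ∀ f ∈ V, range f ≤ T) ∨
      ∃ S : Submodule K U, finrank K U ≤ finrank K S + 1 ∧ ∀ f ∈ V, S ≤ ker f := by
  by_cases h0 : ∀ f ∈ V, f = 0
  · exact Or.inl ⟨⊥, by simp, fun f hf => by simp [h0 f hf]⟩
  push Not at h0
  obtain ⟨f, hf, hf0⟩ := h0
  have dichotomy : ∀ g ∈ V, g ≠ 0 → ∀ h ∈ V, range h ≤ range g ∨ ker g ≤ ker h :=
    fun g hg hg0 h hh =>
      range_le_or_ker_le_of_finrank_le_one hg0 (hV h hh) (hV _ (V.add_mem hg hh))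
  by_cases hrange : ∀ g ∈ V, range g ≤ range f
  · exact Or.inl ⟨range f, hV f hf, hrange⟩
  push Not at hrange
  obtain ⟨g, hg, hgf⟩ := hrange
  have hg0 : g ≠ 0 := by
    rintro rfl
    simp at hgf
  have hker := (dichotomy f hf hf0 g hg).resolve_left hgf
  refine Or.inr ⟨ker f, ?_, fun h hh => ?_⟩
  · rw [← finrank_range_add_finrank_ker f, add_comm]
    exact Nat.add_le_add_left (hV f hf) _
  · by_contra hfh
    have hhf := (dichotomy f hf hf0 h hh).resolve_right hfh
    have hhg := (dichotomy g hg hg0 h hh).resolve_right fun hgh => hfh (hker.trans hgh)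
    have hh0 : h ≠ 0 := by
      rintro rfl
      simp at hfh
    have hpos := one_le_finrank_iff.2 (mt range_eq_bot.1 hh0)
    have eq_f := eq_of_le_of_finrank_le hhf ((hV f hf).trans hpos)
    have eq_g := eq_of_le_of_finrank_le hhg ((hV g hg).trans hpos)
    exact hgf (eq_g.ge.trans eq_f.le)

theorem finrank_map_add_finrank_inf_ker (f : U →ₗ[K] W) (S : Submodule K U)
    [FiniteDimensional K S] :
    finrank K (S.map f) + finrank K (S ⊓ ker f : Submodule K U) = finrank K S := by
  rw [← finrank_range_add_finrank_ker (f.domRestrict S), range_domRestrict, ker_domRestrict,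
    ← finrank_map_subtype_eq, map_comap_subtype]

theorem finrank_map_lt_finrank_of_not_disjoint_ker {f : U →ₗ[K] W} {S : Submodule K U}
    [FiniteDimensional K S] (hS : ¬ Disjoint S (ker f)) :
    finrank K (S.map f) < finrank K S := by
  have hdim := finrank_map_add_finrank_inf_ker f S
  have hpos := one_le_finrank_iff.2 (mt disjoint_iff.2 hS)
  omega

theorem exists_linearEquiv_apply_eq {v w : U} (hv : v ≠ 0) (hw : w ≠ 0) :
    ∃ g : U ≃ₗ[K] U, g v = w := by
  obtain ⟨g, hg⟩ := Submodule.exists_linearEquiv_restrict_eq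
    (LinearEquiv.coord K U v hv ≪≫ₗ LinearEquiv.toSpanNonzeroSingleton K U w hw)
  refine ⟨g, ?_⟩
  rw [← hg ⟨v, mem_span_singleton_self v⟩, LinearEquiv.trans_apply, LinearEquiv.coord_self]
  exact one_smul K w

theorem finrank_map_lt_finrank_range [FiniteDimensional K W] {f : U →ₗ[K] W} {H : Submodule K U}
    (hH : H ≠ ⊤) (hf : ker f ≤ H) : finrank K (H.map f) < finrank K (range f) := by
  refine finrank_lt_finrank_of_lt (map_le_range.lt_of_ne fun h => hH ?_)
  rw [← sup_eq_left.2 hf]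
  exact (map_eq_range_iff.1 h).eq_top

theorem finrank_comap_le [FiniteDimensional K U] [FiniteDimensional K W] (f : U →ₗ[K] W)
    (T : Submodule K W) : finrank K (T.comap f) ≤ finrank K T + finrank K (ker f) := by
  rw [← finrank_map_add_finrank_inf_ker f (T.comap f)]
  exact Nat.add_le_add (finrank_mono (map_comap_le f T)) (finrank_mono inf_le_right)

theorem finrank_range_mkQ_comp_comp_ker_subtype_lt [FiniteDimensional K W] {f E : U →ₗ[K] W}
    {r : ℕ} (hE : E ≠ 0) (hf : finrank K (range f) ≤ r) (hfE : finrank K (range (f + E)) ≤ r) :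
    finrank K (range ((range E).mkQ ∘ₗ f ∘ₗ (ker E).subtype)) < r := by
  have hrange : range ((range E).mkQ ∘ₗ f ∘ₗ (ker E).subtype) =
      ((ker E).map f).map (range E).mkQ := by
    rw [range_comp, range_comp, range_subtype]
  rw [hrange]
  have hagree : (ker E).map (f + E) = (ker E).map f := by
    ext w
    simp only [Submodule.mem_map, LinearMap.add_apply]
    refine exists_congr fun y => and_congr_right fun hy => ?_
    rw [mem_ker.1 hy, add_zero]
  by_contra! hlt
  have hle := hlt.trans (finrank_map_le _ _)
  have eq_f := eq_of_le_of_finrank_le (map_le_range (f := f) (p := ker E)) (hf.trans hle)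
  have eq_fE := eq_of_le_of_finrank_le (map_le_range (f := f + E) (p := ker E))
    (hfE.trans (hagree ▸ hle))
  have hEle : range E ≤ (ker E).map f := by
    rintro _ ⟨x, rfl⟩
    have hx : (f + E) x ∈ (ker E).map f := by
      rw [← hagree, eq_fE]
      exact mem_range_self _ x
    exact (Submodule.add_mem_iff_right _ (eq_f ▸ mem_range_self f x)).1 hx
  have hcollapse : ¬ Disjoint ((ker E).map f) (ker (range E).mkQ) := by
    rw [ker_mkQ, disjoint_comm]
    exact fun h => hE (range_eq_bot.1 (h.eq_bot_of_le hEle))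
  have hmap_lt := finrank_map_lt_finrank_of_not_disjoint_ker hcollapse
  rw [eq_f] at hmap_lt
  exact (hmap_lt.trans_le hf).not_ge (eq_f ▸ hlt)

theorem trace_eq_neg_one_of_not_isUnit {P : Type*} [AddCommGroup P] [Module K P]
    (hP : finrank K P = 2) {A : End K P} (hA : ¬ IsUnit A) (hA1 : ¬ IsUnit (A + 1)) :
    trace K P A = -1 := by
  have : FiniteDimensional K P := FiniteDimensional.of_finrank_pos (by omega)
  let b := finBasisOfFinrankEq K P hP
  have det_eq_zero {B : End K P} (hB : ¬ IsUnit B) : (toMatrix b b B).det = 0 := by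
    by_contra h
    rw [det_toMatrix] at h
    exact hB ((LinearMap.isUnit_iff_isUnit_det B).2 (isUnit_iff_ne_zero.2 h))
  have h0 := det_eq_zero hA
  have h1 := det_eq_zero hA1
  rw [map_add, toMatrix_one] at h1
  rw [trace_eq_matrix_trace K b, Matrix.trace_fin_two]
  rw [Matrix.det_fin_two] at h0 h1
  simp only [Matrix.add_apply, one_apply_eq, ne_eq, zero_ne_one, not_false_eq_true,
    one_apply_ne, add_zero, one_ne_zero] at h1
  linear_combination h1 - h0

theorem dualAnnihilator_le_iff_dualCoannihilator_le [FiniteDimensional K U]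
    {S : Submodule K U} {T : Submodule K (Dual K U)} :
    S.dualAnnihilator ≤ T ↔ T.dualCoannihilator ≤ S := by
  nth_rw 1 [← Subspace.dualCoannihilator_dualAnnihilator_eq (W := T)]
  exact Subspace.dualAnnihilator_le_dualAnnihilator_iff

/-- Basis-free form of primitivity for a space `V` of linear maps of upper rank `r`. In terms of
matrices, column deletion restricts maps to a hyperplane `H`, and the rank of `f` drops on `H`
exactly when `ker f ≤ H`; row deletion composes maps with the quotient by a line `L`, and the
rank of `f` drops exactly when `L ≤ range f`. -/
structure IsPrimitiveSpace (V : Submodule K (U →ₗ[K] W)) (r : ℕ) : Prop where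
  finrank_range_le : ∀ f ∈ V, finrank K (range f) ≤ r
  exists_finrank_range_eq : ∃ f ∈ V, finrank K (range f) = r
  eq_bot_of_le_ker : ∀ S : Submodule K U, (∀ f ∈ V, S ≤ ker f) → S = ⊥
  eq_top_of_range_le : ∀ T : Submodule K W, (∀ f ∈ V, range f ≤ T) → T = ⊤
  exists_not_ker_le : ∀ H : Submodule K U, H ≠ ⊤ →
    ∃ f ∈ V, finrank K (range f) = r ∧ ¬ ker f ≤ H
  exists_not_le_range : ∀ L : Submodule K W, L ≠ ⊥ →
    ∃ f ∈ V, finrank K (range f) = r ∧ ¬ L ≤ range f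

variable {V : Submodule K (U →ₗ[K] W)}

namespace IsPrimitiveSpace

variable {r : ℕ}

theorem dual [FiniteDimensional K U] [FiniteDimensional K W] (hV : IsPrimitiveSpace V r) :
    IsPrimitiveSpace (V.map Dual.transpose) r where
  finrank_range_le := by
    rintro _ ⟨f, hf, rfl⟩
    exact (finrank_range_dualMap_eq_finrank_range f).trans_le (hV.finrank_range_le f hf)
  exists_finrank_range_eq := by
    obtain ⟨f, hf, hfr⟩ := hV.exists_finrank_range_eq
    exact ⟨_, mem_map_of_mem hf, (finrank_range_dualMap_eq_finrank_range f).trans hfr⟩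
  eq_bot_of_le_ker S hS := by
    have htop : S.dualCoannihilator = ⊤ := hV.eq_top_of_range_le _ fun f hf =>
      le_dualAnnihilator_iff_le_dualCoannihilator.1
        ((hS _ (mem_map_of_mem hf)).trans_eq (ker_dualMap_eq_dualAnnihilator_range f))
    rw [← Subspace.dualCoannihilator_dualAnnihilator_eq (W := S), htop, dualAnnihilator_top]
  eq_top_of_range_le T hT := by
    have hbot : T.dualCoannihilator = ⊥ := hV.eq_bot_of_le_ker _ fun f hf =>
      dualAnnihilator_le_iff_dualCoannihilator_le.1
        ((range_dualMap_eq_dualAnnihilator_ker f).symm.trans_le (hT _ (mem_map_of_mem hf)))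
    rw [← Subspace.dualCoannihilator_dualAnnihilator_eq (W := T), hbot, dualAnnihilator_bot]
  exists_not_ker_le H hH := by
    have hne : H.dualCoannihilator ≠ ⊥ := fun h => hH <| by
      rw [← Subspace.dualCoannihilator_dualAnnihilator_eq (W := H), h, dualAnnihilator_bot]
    obtain ⟨f, hf, hfr, hfH⟩ := hV.exists_not_le_range _ hne
    refine ⟨_, mem_map_of_mem hf, (finrank_range_dualMap_eq_finrank_range f).trans hfr, ?_⟩
    exact fun h => hfH (dualAnnihilator_le_iff_dualCoannihilator_le.1
      ((ker_dualMap_eq_dualAnnihilator_range f).symm.trans_le h))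
  exists_not_le_range L hL := by
    have hne : L.dualCoannihilator ≠ ⊤ := fun h => hL <| by
      rw [← Subspace.dualCoannihilator_dualAnnihilator_eq (W := L), h, dualAnnihilator_top]
    obtain ⟨f, hf, hfr, hfL⟩ := hV.exists_not_ker_le _ hne
    refine ⟨_, mem_map_of_mem hf, (finrank_range_dualMap_eq_finrank_range f).trans hfr, ?_⟩
    exact fun h => hfL (le_dualAnnihilator_iff_le_dualCoannihilator.1
      (h.trans_eq (range_dualMap_eq_dualAnnihilator_ker f)))

theorem lt_finrank_codomain [FiniteDimensional K W] (hV : IsPrimitiveSpace V r) (hr : 0 < r) :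
    r < finrank K W := by
  obtain ⟨f, -, hfr⟩ := hV.exists_finrank_range_eq
  have htop : (⊤ : Submodule K W) ≠ ⊥ := by
    intro h
    rw [eq_bot_iff.2 (le_top.trans_eq h : range f ≤ ⊥), finrank_bot] at hfr
    omega
  obtain ⟨g, -, hgr, hgtop⟩ := hV.exists_not_le_range ⊤ htop
  rw [← hgr]
  exact finrank_lt fun h => hgtop h.ge

theorem lt_finrank_domain [FiniteDimensional K U] [FiniteDimensional K W]
    (hV : IsPrimitiveSpace V r) (hr : 0 < r) : r < finrank K U :=
  (hV.dual.lt_finrank_codomain hr).trans_eq Subspace.dual_finrank_eq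

end IsPrimitiveSpace

section Hyperplane

variable {H : Submodule K U} {P : Submodule K W}

theorem eq_span_singleton_of_finrank_le_one [FiniteDimensional K W] {y : W} (hP : finrank K P ≤ 1)
    (hy : y ∈ P) (hy0 : y ≠ 0) : P = K ∙ y :=
  (eq_of_le_of_finrank_le ((span_singleton_le_iff_mem y P).2 hy)
    (by rwa [finrank_span_singleton hy0])).symm

theorem trace_restrict_comp_eq_neg_one {m f : U →ₗ[K] W} (hP : finrank K P = 2)
    (hm : ∀ x ∈ H, m x ∈ P) (hf : ∀ x ∈ H, f x ∈ P) {s : P →ₗ[K] H}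
    (hs : m.restrict hm ∘ₗ s = LinearMap.id) (hfH : finrank K (H.map f) < 2)
    (hfmH : finrank K (H.map (f + m)) < 2) : trace K P (f.restrict hf ∘ₗ s) = -1 := by
  have : FiniteDimensional K P := FiniteDimensional.of_finrank_pos (by omega)
  have not_isUnit {g : U →ₗ[K] W} (hg : ∀ x ∈ H, g x ∈ P) (hgH : finrank K (H.map g) < 2) :
      ¬ IsUnit (g.restrict hg ∘ₗ s : End K P) := by
    rw [isUnit_iff_range_eq_top]
    intro htop
    have hmap : (range (g.restrict hg)).map P.subtype = H.map g := by
      rw [← range_comp, subtype_comp_restrict, range_domRestrict]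
    have htop' : range (g.restrict hg) = ⊤ :=
      top_le_iff.1 (htop.ge.trans (range_comp_le_range s (g.restrict hg)))
    rw [← hmap, htop', finrank_map_subtype_eq, finrank_top] at hgH
    omega
  have hfm : ∀ x ∈ H, (f + m) x ∈ P := fun x hx => P.add_mem (hf x hx) (hm x hx)
  refine trace_eq_neg_one_of_not_isUnit hP (not_isUnit hf hfH) ?_
  have hadd : (f.restrict hf ∘ₗ s : End K P) + 1 = (f + m).restrict hfm ∘ₗ s := by
    rw [Module.End.one_eq_id, ← hs, ← LinearMap.add_comp]
    rfl
  rw [hadd]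
  exact not_isUnit hfm hfmH

theorem apply_eq_zero_of_finrank_map_lt_two [FiniteDimensional K W] {m f : U →ₗ[K] W}
    (hfH : finrank K (H.map f) < 2) (hfmH : finrank K (H.map (f + m)) < 2)
    (hmH : 2 ≤ finrank K (H.map m)) {x : U} (hx : x ∈ H) (hmx : m x = 0) : f x = 0 := by
  by_contra hfx
  have eq_f := eq_span_singleton_of_finrank_le_one (Nat.lt_succ_iff.1 hfH)
    (mem_map_of_mem hx) hfx
  have eq_fm := eq_span_singleton_of_finrank_le_one (Nat.lt_succ_iff.1 hfmH)
    (y := f x) ⟨x, hx, by simp [hmx]⟩ hfx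
  have hle : H.map m ≤ K ∙ f x := by
    rintro _ ⟨y, hy, rfl⟩
    have hfy : f y ∈ K ∙ f x := eq_f ▸ mem_map_of_mem hy
    have hfmy : (f + m) y ∈ K ∙ f x := eq_fm ▸ mem_map_of_mem hy
    exact (Submodule.add_mem_iff_right _ hfy).1 hfmy
  have hrank := finrank_mono hle
  rw [finrank_span_singleton hfx] at hrank
  omega

theorem finrank_map_lt_of_apply_notMem [FiniteDimensional K W] {f : U →ₗ[K] W} {e : U}
    (hfH : H.map f ≤ P) (hfe : f e ∉ P) : finrank K (H.map f) < finrank K (range f) :=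
  finrank_lt_finrank_of_lt <| map_le_range.lt_of_ne fun h =>
    hfe (hfH (h ▸ mem_range_self f e))

variable {m : U →ₗ[K] W} {e : U}

theorem finrank_map_lt_two_of_apply_notMem [FiniteDimensional K W]
    (hV : ∀ f ∈ V, finrank K (range f) ≤ 2) (hHP : ∀ f ∈ V, H.map f ≤ P) (hm : m ∈ V)
    (hme : m e = 0) {f : U →ₗ[K] W} (hf : f ∈ V) (hfe : f e ∉ P) :
    finrank K (H.map f) < 2 ∧ finrank K (H.map (f + m)) < 2 := by
  have hfm := V.add_mem hf hm
  have hfme : (f + m) e ∉ P := by simpa [hme] using hfe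
  exact ⟨(finrank_map_lt_of_apply_notMem (hHP f hf) hfe).trans_le (hV f hf),
    (finrank_map_lt_of_apply_notMem (hHP _ hfm) hfme).trans_le (hV _ hfm)⟩

/- If `f`, `g` and `f + g` all sent `e` outside `P`, the trace `-1` attached to `f + g` would be
the sum of the traces `-1` attached to `f` and `g`. -/
theorem apply_add_apply_mem [FiniteDimensional K W]
    (hV : ∀ f ∈ V, finrank K (range f) ≤ 2) (hHP : ∀ f ∈ V, H.map f ≤ P) (hm : m ∈ V)
    (hme : m e = 0) (hP : finrank K P = 2) (hmP : H.map m = P) {f g : U →ₗ[K] W} (hf : f ∈ V)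
    (hg : g ∈ V) (hfe : f e ∉ P) (hge : g e ∉ P) : f e + g e ∈ P := by
  by_contra hfge
  have mapsTo : ∀ h ∈ V, ∀ x ∈ H, h x ∈ P := fun h hh => map_le_iff_le_comap.1 (hHP h hh)
  have hsurj : range (m.restrict (mapsTo m hm)) = ⊤ := by
    rw [range_eq_top]
    rintro ⟨y, hy⟩
    obtain ⟨x, hx, rfl⟩ := hmP.ge hy
    exact ⟨⟨x, hx⟩, rfl⟩
  obtain ⟨s, hs⟩ := LinearMap.exists_rightInverse_of_surjective _ hsurj
  have trace_eq {h : U →ₗ[K] W} (hh : h ∈ V) (hhe : h e ∉ P) :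
      trace K P (h.restrict (mapsTo h hh) ∘ₗ s) = -1 :=
    have hlt := finrank_map_lt_two_of_apply_notMem hV hHP hm hme hh hhe
    trace_restrict_comp_eq_neg_one hP _ _ hs hlt.1 hlt.2
  have htrace := trace_eq (V.add_mem hf hg) hfge
  have hadd : (f + g).restrict (mapsTo _ (V.add_mem hf hg)) ∘ₗ s =
      f.restrict (mapsTo f hf) ∘ₗ s + g.restrict (mapsTo g hg) ∘ₗ s := rfl
  rw [hadd, map_add, trace_eq hf hfe, trace_eq hg hge] at htrace
  simp at htrace

theorem range_le_of_sup_span_singleton_eq_top (htop : H ⊔ K ∙ e = ⊤) {f : U →ₗ[K] W}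
    {T : Submodule K W} (hfH : H.map f ≤ T) (hfe : f e ∈ T) : range f ≤ T := by
  rw [range_eq_map, ← htop, Submodule.map_sup, Submodule.map_span, Set.image_singleton]
  exact sup_le hfH ((span_singleton_le_iff_mem _ _).2 hfe)

namespace IsPrimitiveSpace

theorem exists_apply_notMem [FiniteDimensional K W] (hV : IsPrimitiveSpace V 2)
    (hP : finrank K P ≤ 2) (hHP : ∀ f ∈ V, H.map f ≤ P) (htop : H ⊔ K ∙ e = ⊤) :
    ∃ f ∈ V, f e ∉ P := by
  by_contra! h
  have hP_top : P = ⊤ := hV.eq_top_of_range_le P fun f hf =>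
    range_le_of_sup_span_singleton_eq_top htop (hHP f hf) (h f hf)
  rw [hP_top, finrank_top] at hP
  exact hP.not_gt (hV.lt_finrank_codomain two_pos)

theorem disjoint_ker_of_apply_notMem [FiniteDimensional K W] (hV : IsPrimitiveSpace V 2)
    (hHP : ∀ f ∈ V, H.map f ≤ P) (hm : m ∈ V) (hme : m e = 0) (hP : finrank K P = 2)
    (hmP : H.map m = P) {N : U →ₗ[K] W} (hN : N ∈ V) (hNe : N e ∉ P) : Disjoint H (ker m) := by
  refine disjoint_iff.2 (hV.eq_bot_of_le_ker _ ?_)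
  rintro f hf x ⟨hx, hmx⟩
  have apply_eq_zero {g : U →ₗ[K] W} (hg : g ∈ V) (hge : g e ∉ P) : g x = 0 :=
    have hlt := finrank_map_lt_two_of_apply_notMem hV.finrank_range_le hHP hm hme hg hge
    apply_eq_zero_of_finrank_map_lt_two hlt.1 hlt.2 (hmP ▸ hP.ge) hx hmx
  by_cases hfe : f e ∈ P
  · have hfN := apply_eq_zero (V.add_mem hf hN) (mt (P.add_mem_iff_right hfe).1 hNe)
    rwa [LinearMap.add_apply, apply_eq_zero hN hNe, add_zero] at hfN
  · exact apply_eq_zero hf hfe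

variable [FiniteDimensional K U] [FiniteDimensional K W]

theorem exists_map_eq_of_forall_map_le (hV : IsPrimitiveSpace V 2)
    (hH : finrank K U ≤ finrank K H + 1) (hP : finrank K P ≤ 2) (hHP : ∀ f ∈ V, H.map f ≤ P) :
    ∃ m ∈ V, ∃ e, m e = 0 ∧ finrank K (range m) = 2 ∧ H.map m = P ∧ H ⊔ K ∙ e = ⊤ := by
  have hH_top : H ≠ ⊤ := by
    rintro rfl
    have hP_top : P = ⊤ := hV.eq_top_of_range_le P fun f hf => by
      rw [range_eq_map]
      exact hHP f hf
    rw [hP_top, finrank_top] at hP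
    exact hP.not_gt (hV.lt_finrank_codomain two_pos)
  obtain ⟨m, hm, hm2, hker⟩ := hV.exists_not_ker_le H hH_top
  obtain ⟨e, hme, heH⟩ := SetLike.not_le_iff_exists.1 hker
  have htop : H ⊔ K ∙ e = ⊤ := by
    refine eq_top_of_finrank_eq (le_antisymm (Submodule.finrank_le _) (hH.trans ?_))
    refine Nat.succ_le_iff.2 (finrank_lt_finrank_of_lt (left_lt_sup.2 fun h => heH ?_))
    exact h (mem_span_singleton_self e)
  have hrange : range m ≤ H.map m := by
    refine range_le_of_sup_span_singleton_eq_top htop le_rfl ?_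
    rw [mem_ker.1 hme]
    exact zero_mem _
  refine ⟨m, hm, e, hme, hm2, eq_of_le_of_finrank_le (hHP m hm) ?_, htop⟩
  exact hP.trans (hm2.ge.trans (finrank_mono hrange))

theorem finrank_le_three_of_forall_map_le (hV : IsPrimitiveSpace V 2)
    (hH : finrank K U ≤ finrank K H + 1) (hP : finrank K P ≤ 2) (hHP : ∀ f ∈ V, H.map f ≤ P) :
    finrank K U ≤ 3 ∧ finrank K W ≤ 3 := by
  obtain ⟨m, hm, e, hme, hm2, hmP, htop⟩ := hV.exists_map_eq_of_forall_map_le hH hP hHP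
  obtain ⟨N, hN, hNe⟩ := hV.exists_apply_notMem hP hHP htop
  have hP2 : finrank K P = 2 := by
    refine le_antisymm hP (hm2.ge.trans (finrank_mono ?_))
    exact range_le_of_sup_span_singleton_eq_top htop hmP.le (hme ▸ zero_mem P)
  have hdisj := hV.disjoint_ker_of_apply_notMem hHP hm hme hP2 hmP hN hNe
  have hrange : ∀ f ∈ V, range f ≤ P ⊔ K ∙ N e := by
    intro f hf
    refine range_le_of_sup_span_singleton_eq_top htop ((hHP f hf).trans le_sup_left) ?_
    by_cases hfe : f e ∈ P
    · exact mem_sup_left hfe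
    · have hsum := apply_add_apply_mem hV.finrank_range_le hHP hm hme hP2 hmP hf hN hfe hNe
      rw [← add_sub_cancel_right (f e) (N e)]
      exact sub_mem (mem_sup_left hsum) (mem_sup_right (mem_span_singleton_self _))
  constructor
  · have hHker := finrank_add_finrank_le_of_disjoint hdisj
    have hdim := finrank_range_add_finrank_ker m
    omega
  · rw [← finrank_top K W, ← hV.eq_top_of_range_le _ hrange]
    have hspan := finrank_add_le_finrank_add_finrank P (K ∙ N e)
    have hNe0 : N e ≠ 0 := fun h => hNe (h.symm ▸ zero_mem P)
    rw [finrank_span_singleton hNe0] at hspan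
    omega

theorem finrank_le_three_of_forall_map_le_line (hV : IsPrimitiveSpace V 2) {G : Submodule K U}
    {L : Submodule K W} (hG : finrank K U ≤ finrank K G + 2) (hL : finrank K L ≤ 1)
    (hGL : ∀ f ∈ V, G.map f ≤ L) : finrank K U ≤ 3 ∧ finrank K W ≤ 3 := by
  have hGdim := Subspace.finrank_add_finrank_dualAnnihilator_eq G
  have hLdim := Subspace.finrank_add_finrank_dualAnnihilator_eq L
  have hdual : finrank K (Dual K W) ≤ 3 ∧ finrank K (Dual K U) ≤ 3 := by
    refine hV.dual.finrank_le_three_of_forall_map_le (H := L.dualAnnihilator)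
      (P := G.dualAnnihilator) ?_ (by omega) ?_
    · rw [Subspace.dual_finrank_eq]
      omega
    · rintro _ ⟨f, hf, rfl⟩ _ ⟨φ, hφ, rfl⟩
      rw [SetLike.mem_coe, mem_dualAnnihilator] at hφ
      exact (mem_dualAnnihilator _).2 fun x hx => hφ _ (hGL f hf (mem_map_of_mem hx))
  rw [Subspace.dual_finrank_eq, Subspace.dual_finrank_eq] at hdual
  exact hdual.symm

end IsPrimitiveSpace

end Hyperplane

/- Adding `E` to the maps of `V` shows that they induce maps `ker E → W ⧸ range E` of rank at
most one. -/
theorem IsPrimitiveSpace.finrank_le_three_of_finrank_range_le_one [FiniteDimensional K U]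
    [FiniteDimensional K W] (hV : IsPrimitiveSpace V 2) {E : U →ₗ[K] W} (hE : E ∈ V)
    (hE0 : E ≠ 0) (hE1 : finrank K (range E) ≤ 1) : finrank K U ≤ 3 ∧ finrank K W ≤ 3 := by
  let compress : (U →ₗ[K] W) →ₗ[K] (ker E →ₗ[K] W ⧸ range E) :=
    compRight K (range E).mkQ ∘ₗ lcomp K W (ker E).subtype
  have hcompress : ∀ g ∈ V.map compress, finrank K (range g) ≤ 1 := by
    rintro _ ⟨f, hf, rfl⟩
    exact Nat.lt_succ_iff.1 <| finrank_range_mkQ_comp_comp_ker_subtype_lt hE0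
      (hV.finrank_range_le f hf) (hV.finrank_range_le _ (V.add_mem hf hE))
  have hdim := finrank_range_add_finrank_ker E
  rcases exists_common_range_or_ker hcompress with ⟨T, hT, hrange⟩ | ⟨S, hS, hker⟩
  · refine hV.finrank_le_three_of_forall_map_le (H := ker E) (P := T.comap (range E).mkQ)
      (by omega) ?_ ?_
    · have hcomap := finrank_comap_le (range E).mkQ T
      rw [ker_mkQ] at hcomap
      omega
    · rintro f hf _ ⟨x, hx, rfl⟩
      exact hrange _ (mem_map_of_mem hf) ⟨⟨x, hx⟩, rfl⟩
  · refine hV.finrank_le_three_of_forall_map_le_line (G := S.map (ker E).subtype) (L := range E)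
      ?_ hE1 ?_
    · rw [finrank_map_subtype_eq]
      omega
    · rintro f hf _ ⟨_, ⟨x, hx, rfl⟩, rfl⟩
      exact (Submodule.Quotient.mk_eq_zero _).1 (hker _ (mem_map_of_mem hf) hx)

section ConstantRank

/-- `V` is a space of constant rank `r`: all its nonzero maps have rank `r`. For `r = 2` this is
what remains of a space of upper rank two once rank one is excluded. -/
def IsConstantRank (V : Submodule K (U →ₗ[K] W)) (r : ℕ) : Prop :=
  ∀ f ∈ V, f ≠ 0 → finrank K (range f) = r

theorem IsConstantRank.dual {r : ℕ} (hV : IsConstantRank V r) :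
    IsConstantRank (V.map Dual.transpose) r := by
  rintro _ ⟨f, hf, rfl⟩ hf0
  refine (finrank_range_dualMap_eq_finrank_range f).trans (hV f hf ?_)
  rintro rfl
  exact hf0 (map_zero _)

theorem ker_le_ker_of_disjoint_range [FiniteDimensional K U] {f g : U →ₗ[K] W}
    (hdisj : Disjoint (range f) (range g))
    (hrank : finrank K (range (f + g)) ≤ finrank K (range f)) : ker f ≤ ker g := by
  have hker : ker (f + g) ≤ ker f ⊓ ker g := by
    intro x hx
    have hfg : f x = g (-x) := by
      rw [map_neg]
      exact eq_neg_of_add_eq_zero_left hx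
    have hfx : f x = 0 := disjoint_def.1 hdisj _ (mem_range_self f x) (hfg ▸ mem_range_self g _)
    have hgx : g x = 0 := by simpa [hfx] using hx
    exact ⟨hfx, hgx⟩
  have hdim_f := finrank_range_add_finrank_ker f
  have hdim_fg := finrank_range_add_finrank_ker (f + g)
  exact (eq_of_le_of_finrank_le (hker.trans inf_le_left) (by omega)).ge.trans
    (hker.trans inf_le_right)

theorem add_ne_zero_of_disjoint_range {f g : U →ₗ[K] W} (hf0 : f ≠ 0)
    (hdisj : Disjoint (range f) (range g)) : f + g ≠ 0 := by
  intro hfg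
  rw [eq_neg_of_add_eq_zero_right hfg, range_neg, disjoint_self] at hdisj
  exact hf0 (range_eq_bot.1 hdisj)

theorem apply_notMem_range_sub {f g : U →ₗ[K] W} (hdisj : Disjoint (range f) (range g))
    (hker : ker g ≤ ker f) {x : U} (hfx : f x ≠ 0) : f x ∉ range (f - g) := by
  rintro ⟨z, hz⟩
  have hfg : f (z - x) = g z := by
    rw [map_sub, ← hz, LinearMap.sub_apply, sub_sub_cancel]
  have hgz : g z = 0 := disjoint_def.1 hdisj _ (hfg ▸ mem_range_self f _) (mem_range_self g z)
  have hfz : f z = 0 := hker hgz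
  rw [LinearMap.sub_apply, hfz, hgz, sub_zero] at hz
  exact hfx hz.symm

namespace IsConstantRank

theorem finrank_range_le {r : ℕ} (hV : IsConstantRank V r) {f : U →ₗ[K] W} (hf : f ∈ V) :
    finrank K (range f) ≤ r := by
  by_cases hf0 : f = 0
  · rw [hf0, range_zero]
    simp
  · exact (hV f hf hf0).le

theorem ker_le_ker [FiniteDimensional K U] {r : ℕ} (hV : IsConstantRank V r) {f g : U →ₗ[K] W}
    (hf : f ∈ V) (hg : g ∈ V) (hf0 : f ≠ 0) (hdisj : Disjoint (range f) (range g)) :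
    ker f ≤ ker g := by
  refine ker_le_ker_of_disjoint_range hdisj (le_of_eq ?_)
  rw [hV f hf hf0, hV _ (V.add_mem hf hg) (add_ne_zero_of_disjoint_range hf0 hdisj)]

theorem exists_apply_mem_range [FiniteDimensional K U] {r : ℕ} (hV : IsConstantRank V r)
    {f c : U →ₗ[K] W} (hf : f ∈ V) (hc : c ∈ V) (hf0 : f ≠ 0) (hfc : ¬ ker f ≤ ker c) :
    ∃ u, f u ∈ range c ∧ f u ≠ 0 := by
  by_contra! h
  refine hfc (hV.ker_le_ker hf hc hf0 (disjoint_def.2 ?_))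
  rintro _ ⟨u, rfl⟩ huc
  exact h u huc

theorem range_eq_span_sup_span [FiniteDimensional K W] (hV : IsConstantRank V 2)
    {f g c : U →ₗ[K] W} (hdisj : Disjoint (range f) (range g)) (hc : c ∈ V) (hc0 : c ≠ 0)
    {x y : U} (hfx : f x ∈ range c) (hgy : g y ∈ range c) (hfx0 : f x ≠ 0) (hgy0 : g y ≠ 0) :
    range c = K ∙ f x ⊔ K ∙ g y := by
  refine (sup_eq_of_finrank_le_two (hV c hc hc0).le ((span_singleton_le_iff_mem _ _).2 hfx)
    ((span_singleton_le_iff_mem _ _).2 hgy) (by simpa) (by simpa) (hdisj.mono ?_ ?_)).symm <;>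
    simp

variable [FiniteDimensional K U] [FiniteDimensional K W] {f g c : U →ₗ[K] W}

/- A nonzero value `f u + g u` lies in `range c = ⟨f x, g t⟩`. Since `f` and `g` have disjoint
ranges and the same kernel, comparing components shows that `g u` is a nonzero multiple of `g x`
and a multiple of `g t`. -/
theorem apply_mem_range (hV : IsConstantRank V 2) (hf : f ∈ V) (hg : g ∈ V) (hc : c ∈ V)
    (hf0 : f ≠ 0) (hg0 : g ≠ 0) (hdisj : Disjoint (range f) (range g))
    (hfc : ¬ ker f ≤ ker c) {x : U} (hfx0 : f x ≠ 0) (hfx : f x ∈ range c) :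
    g x ∈ range c := by
  have hc0 : c ≠ 0 := by
    rintro rfl
    simp at hfc
  have hker := hV.ker_le_ker hf hg hf0 hdisj
  obtain ⟨t, htc, ht0⟩ := hV.exists_apply_mem_range hg hc hg0 fun h => hfc (hker.trans h)
  have hker_add : ker f ≤ ker (f + g) := fun y hy =>
    mem_ker.2 (by rw [LinearMap.add_apply, mem_ker.1 hy, mem_ker.1 (hker hy), add_zero])
  obtain ⟨u, huc, hu0⟩ := hV.exists_apply_mem_range (V.add_mem hf hg) hc
    (add_ne_zero_of_disjoint_range hf0 hdisj) fun h => hfc (hker_add.trans h)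
  rw [hV.range_eq_span_sup_span hdisj hc hc0 hfx htc hfx0 ht0] at huc
  obtain ⟨_, hax, _, hbt, hsum⟩ := mem_sup.1 huc
  obtain ⟨a, rfl⟩ := mem_span_singleton.1 hax
  obtain ⟨b, rfl⟩ := mem_span_singleton.1 hbt
  have hfg : f (u - a • x) = g (b • t - u) := by
    simp only [map_sub, map_smul, LinearMap.add_apply] at hsum ⊢
    rw [sub_eq_sub_iff_add_eq_add, ← hsum, add_comm]
  have hfu : f (u - a • x) = 0 :=
    disjoint_def.1 hdisj _ (mem_range_self f _) (hfg ▸ mem_range_self g _)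
  have hgu : g (u - a • x) = 0 := hker hfu
  rw [hfu, eq_comm, map_sub, sub_eq_zero, map_smul] at hfg
  rw [map_sub, sub_eq_zero, map_smul] at hfu hgu
  have ha : a ≠ 0 := by
    rintro rfl
    exact hu0 (by rw [LinearMap.add_apply, hfu, hgu, zero_smul, zero_smul, add_zero])
  rw [← (range c).smul_mem_iff ha, ← hgu, ← hfg]
  exact smul_mem _ b htc

theorem range_add_eq_span_sup_span (hV : IsConstantRank V 2) (hf : f ∈ V) (hg : g ∈ V)
    (hc : c ∈ V) (hdisj : Disjoint (range f) (range g)) (hfc : ¬ ker f ≤ ker c) {x : U}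
    (hcx : c x = 0) (hfx : f x ≠ 0) (hgx : g x ≠ 0) :
    range (c + f) = K ∙ f x ⊔ K ∙ g x := by
  have hf0 : f ≠ 0 := fun h => hfx (by rw [h, LinearMap.zero_apply])
  have hg0 : g ≠ 0 := fun h => hgx (by rw [h, LinearMap.zero_apply])
  have hfcf : ¬ ker f ≤ ker (c + f) := fun h => hfc fun y hy => by
    simpa [mem_ker.1 hy] using h hy
  have hcf0 : c + f ≠ 0 := by
    intro h
    simp [h] at hfcf
  have hfx_mem : f x ∈ range (c + f) := ⟨x, by rw [LinearMap.add_apply, hcx, zero_add]⟩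
  exact hV.range_eq_span_sup_span hdisj (V.add_mem hc hf) hcf0 hfx_mem
    (hV.apply_mem_range hf hg (V.add_mem hc hf) hf0 hg0 hdisj hfcf hfx hfx_mem) hfx hgx

/- If the ranges are disjoint, choose `x` with `c x = 0` and `f x ≠ 0`. Both `c + f` and `c + g`
have range `⟨f x, g x⟩`, hence so has `f - g`, whose range cannot contain `f x`. -/
theorem not_disjoint_range (hV : IsConstantRank V 2) (hf : f ∈ V) (hg : g ∈ V) (hc : c ∈ V)
    (hf0 : f ≠ 0) (hg0 : g ≠ 0) (hfc : ¬ ker f ≤ ker c) : ¬ Disjoint (range f) (range g) := by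
  intro hdisj
  have hker : ker f = ker g :=
    le_antisymm (hV.ker_le_ker hf hg hf0 hdisj) (hV.ker_le_ker hg hf hg0 hdisj.symm)
  have hcf : ¬ ker c ≤ ker f := by
    intro h
    have hc0 : c ≠ 0 := fun hc0 => hfc (by simp [hc0])
    have hdim_f := finrank_range_add_finrank_ker f
    have hdim_c := finrank_range_add_finrank_ker c
    rw [hV f hf hf0] at hdim_f
    rw [hV c hc hc0] at hdim_c
    exact hfc (eq_of_le_of_finrank_le h (by omega)).ge
  obtain ⟨x, hcx, hfx⟩ := SetLike.not_le_iff_exists.1 hcf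
  have hgx : x ∉ ker g := hker ▸ hfx
  have hrange_f := hV.range_add_eq_span_sup_span hf hg hc hdisj hfc hcx hfx hgx
  have hrange_g :=
    hV.range_add_eq_span_sup_span hg hf hc hdisj.symm (hker ▸ hfc) hcx hgx hfx
  have hle : range (f - g) ≤ range (c + f) := by
    rintro _ ⟨y, rfl⟩
    rw [← add_sub_add_left_eq_sub f g c]
    refine sub_mem (mem_range_self _ y) ?_
    rw [hrange_f, sup_comm, ← hrange_g]
    exact mem_range_self _ y
  have hsub0 : f - g ≠ 0 := by
    rw [sub_eq_add_neg]
    exact add_ne_zero_of_disjoint_range hf0 (by rwa [range_neg])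
  have hfx_mem : f x ∈ range (f - g) := by
    rw [eq_of_le_of_finrank_le hle
      ((hV.finrank_range_le (V.add_mem hc hf)).trans (hV _ (V.sub_mem hf hg) hsub0).ge)]
    exact ⟨x, by rw [LinearMap.add_apply, mem_ker.1 hcx, zero_add]⟩
  exact apply_notMem_range_sub hdisj hker.ge hfx hfx_mem

end IsConstantRank

end ConstantRank

namespace IsPrimitiveSpace

variable [FiniteDimensional K U] [FiniteDimensional K W]

theorem not_disjoint_range_of_isConstantRank (hV : IsPrimitiveSpace V 2)
    (hconst : IsConstantRank V 2) {f g : U →ₗ[K] W} (hf : f ∈ V) (hg : g ∈ V) (hf0 : f ≠ 0)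
    (hg0 : g ≠ 0) : ¬ Disjoint (range f) (range g) := by
  by_cases hker : ∀ c ∈ V, ker f ≤ ker c
  · have hdim := finrank_range_add_finrank_ker f
    rw [hV.eq_bot_of_le_ker _ hker, finrank_bot, hconst f hf hf0] at hdim
    exact absurd hdim (hV.lt_finrank_domain two_pos).ne
  · push Not at hker
    obtain ⟨c, hc, hfc⟩ := hker
    exact hconst.not_disjoint_range hf hg hc hf0 hg0 hfc

theorem finrank_codomain_le_three_of_isConstantRank (hV : IsPrimitiveSpace V 2)
    (hconst : IsConstantRank V 2) : finrank K W ≤ 3 := by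
  obtain ⟨S, hS, hrange⟩ := exists_finrank_le_three_forall_le (𝒜 := range '' {f ∈ V | f ≠ 0})
    (by rintro _ ⟨f, ⟨hf, hf0⟩, rfl⟩; exact hconst f hf hf0)
    (by
      rintro _ ⟨f, ⟨hf, hf0⟩, rfl⟩ _ ⟨g, ⟨hg, hg0⟩, rfl⟩
      exact hV.not_disjoint_range_of_isConstantRank hconst hf hg hf0 hg0)
    (by
      intro L hL
      obtain ⟨f, hf, hf2, hfL⟩ := hV.exists_not_le_range L hL
      refine ⟨_, ⟨f, ⟨hf, ?_⟩, rfl⟩, hfL⟩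
      rintro rfl
      rw [range_zero, finrank_bot] at hf2
      omega)
  rw [← finrank_top K W, ← hV.eq_top_of_range_le S ?_]
  · exact hS
  intro f hf
  by_cases hf0 : f = 0
  · rw [hf0, range_zero]
    simp
  · exact hrange _ ⟨f, ⟨hf, hf0⟩, rfl⟩

theorem finrank_eq_three (hV : IsPrimitiveSpace V 2) : finrank K U = 3 ∧ finrank K W = 3 := by
  have hU := hV.lt_finrank_domain two_pos
  have hW := hV.lt_finrank_codomain two_pos
  suffices hle : finrank K U ≤ 3 ∧ finrank K W ≤ 3 by omega
  by_cases hline : ∃ E ∈ V, E ≠ 0 ∧ finrank K (range E) ≤ 1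
  · obtain ⟨E, hE, hE0, hE1⟩ := hline
    exact hV.finrank_le_three_of_finrank_range_le_one hE hE0 hE1
  · push Not at hline
    have hconst : IsConstantRank V 2 := fun f hf hf0 =>
      le_antisymm (hV.finrank_range_le f hf) (hline f hf hf0)
    refine ⟨?_, hV.finrank_codomain_le_three_of_isConstantRank hconst⟩
    rw [← Subspace.dual_finrank_eq]
    exact hV.dual.finrank_codomain_le_three_of_isConstantRank hconst.dual

end IsPrimitiveSpace

end LinearMaps

section Matrices

open Module LinearMap Submodule

variable {K : Type*} [Field K] {n p : ℕ}

theorem exists_isUnit_dropRow_mulVec_eq_zero {w : Fin n → K} (hw : w ≠ 0) :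
    ∃ R : Matrix (Fin n) (Fin n) K, IsUnit R ∧ dropRow R *ᵥ w = 0 := by
  cases n with
  | zero => exact absurd (Subsingleton.elim w 0) hw
  | succ n =>
    have hlast : (Pi.single (Fin.last n) 1 : Fin (n + 1) → K) ≠ 0 :=
      Pi.single_ne_zero_iff.2 one_ne_zero
    obtain ⟨g, hg⟩ := exists_linearEquiv_apply_eq (K := K) hw hlast
    let R := toMatrix' g.toLinearMap
    have hRw : R *ᵥ w = Pi.single (Fin.last n) 1 := by
      rw [toMatrix'_mulVec, LinearEquiv.coe_coe, hg]
    refine ⟨R, isUnit_toMatrix'_iff.2 ((End.isUnit_iff _).2 g.bijective), funext fun i => ?_⟩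
    exact (congrFun hRw i.castSucc).trans (Pi.single_eq_of_ne i.castSucc_ne_last 1)

theorem exists_isUnit_rank_dropRow_mul_lt {L : Submodule K (Fin n → K)} (hL : L ≠ ⊥) :
    ∃ R : Matrix (Fin n) (Fin n) K, IsUnit R ∧ ∀ M : Matrix (Fin n) (Fin p) K,
      L ≤ range M.mulVecLin → (dropRow (R * M)).rank < M.rank := by
  obtain ⟨w, hwL, hw⟩ := exists_mem_ne_zero_of_ne_bot hL
  obtain ⟨R, hR, hRw⟩ := exists_isUnit_dropRow_mulVec_eq_zero hw
  refine ⟨R, hR, fun M hM => ?_⟩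
  have hmul : dropRow (R * M) = dropRow R * M := rfl
  rw [hmul, Matrix.rank, Matrix.mulVecLin_mul, range_comp]
  refine finrank_map_lt_finrank_of_not_disjoint_ker fun hdisj => hw ?_
  exact disjoint_def.1 hdisj w (hM hwL) hRw

theorem exists_isUnit_rank_dropCol_mul_lt {H : Submodule K (Fin p → K)} (hH : H ≠ ⊤) :
    ∃ Q : Matrix (Fin p) (Fin p) K, IsUnit Q ∧ ∀ M : Matrix (Fin n) (Fin p) K,
      ker M.mulVecLin ≤ H → (dropCol (M * Q)).rank < M.rank := by
  obtain ⟨φ, hφ, hHφ⟩ := exists_le_ker_of_lt_top H hH.lt_top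
  obtain ⟨w, rfl⟩ := (dotProductEquiv K (Fin p)).surjective φ
  obtain ⟨R, hR, hRw⟩ := exists_isUnit_dropRow_mulVec_eq_zero
    ((dotProductEquiv K (Fin p)).map_ne_zero_iff.1 hφ)
  refine ⟨Rᵀ, (isUnit_transpose R).2 hR, fun M hM => ?_⟩
  have hmul : dropCol (M * Rᵀ) = M * (dropRow R)ᵀ := rfl
  have hrange : range (dropRow R)ᵀ.mulVecLin ≤ ker (dotProductEquiv K (Fin p) w) := by
    rintro _ ⟨x, rfl⟩
    change w ⬝ᵥ ((dropRow R)ᵀ *ᵥ x) = 0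
    rw [dotProduct_mulVec, vecMul_transpose, hRw, zero_dotProduct]
  calc (dropCol (M * Rᵀ)).rank
      = finrank K ((range (dropRow R)ᵀ.mulVecLin).map M.mulVecLin) := by
        rw [hmul, Matrix.rank, Matrix.mulVecLin_mul, range_comp]
    _ ≤ finrank K ((ker (dotProductEquiv K (Fin p) w)).map M.mulVecLin) :=
        finrank_mono (map_mono hrange)
    _ < M.rank := finrank_map_lt_finrank_range (mt ker_eq_top.1 hφ) (hM.trans hHφ)

variable {V : Submodule K (Matrix (Fin n) (Fin p) K)}

theorem bddAbove_rank_image : BddAbove (Matrix.rank '' (V : Set (Matrix (Fin n) (Fin p) K))) :=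
  ⟨Fintype.card (Fin p), by rintro _ ⟨M, -, rfl⟩; exact M.rank_le_card_width⟩

theorem rank_le_urk {M : Matrix (Fin n) (Fin p) K} (hM : M ∈ V) : M.rank ≤ urk V :=
  le_csSup bddAbove_rank_image ⟨M, hM, rfl⟩

variable (V) in
theorem exists_rank_eq_urk : ∃ M ∈ V, M.rank = urk V :=
  Nat.sSup_mem (V.nonempty.image Matrix.rank) bddAbove_rank_image

theorem le_urk_sub_one {M : Matrix (Fin n) (Fin p) K} (hM : M ∈ V) {k : ℕ} (hk : k ≤ M.rank)
    (hlt : M.rank = urk V → k < M.rank) : k ≤ urk V - 1 := by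
  have := rank_le_urk hM
  omega

namespace Primitive

theorem exists_not_ker_le (hV : Primitive K V) {H : Submodule K (Fin p → K)} (hH : H ≠ ⊤) :
    ∃ M ∈ V, M.rank = urk V ∧ ¬ ker M.mulVecLin ≤ H := by
  by_contra! hker
  obtain ⟨Q, hQ, hdrop⟩ := exists_isUnit_rank_dropCol_mul_lt (n := n) hH
  refine hV.1.2 ⟨V.map (mulRightLinearMap (Fin n) K Q),
    ⟨1, Q, isUnit_one, hQ, by ext M; simp⟩, ?_⟩
  rintro _ ⟨M, hM, rfl⟩
  refine le_urk_sub_one hM ?_ fun hr => hdrop M (hker M hM hr)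
  exact Matrix.rank_mul_le_left M (dropCol Q)

theorem exists_not_le_range (hV : Primitive K V) {L : Submodule K (Fin n → K)} (hL : L ≠ ⊥) :
    ∃ M ∈ V, M.rank = urk V ∧ ¬ L ≤ range M.mulVecLin := by
  by_contra! hrange
  obtain ⟨R, hR, hdrop⟩ := exists_isUnit_rank_dropRow_mul_lt (p := p) hL
  refine hV.2 ⟨V.map (mulLeftLinearMap (Fin p) K R),
    ⟨R, 1, hR, isUnit_one, by ext M; simp⟩, ?_⟩
  rintro _ ⟨M, hM, rfl⟩
  refine le_urk_sub_one hM ?_ fun hr => hdrop M (hrange M hM hr)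
  exact Matrix.rank_mul_le_right (dropRow R) M

theorem isPrimitiveSpace (hV : Primitive K V) :
    IsPrimitiveSpace (V.map (toLin' : Matrix (Fin n) (Fin p) K ≃ₗ[K] _).toLinearMap) (urk V) where
  finrank_range_le := by
    rintro _ ⟨M, hM, rfl⟩
    exact rank_le_urk hM
  exists_finrank_range_eq := by
    obtain ⟨M, hM, hr⟩ := exists_rank_eq_urk V
    exact ⟨_, mem_map_of_mem hM, hr⟩
  eq_bot_of_le_ker S hS := by
    refine (Submodule.eq_bot_iff S).2 fun x hx => hV.1.1.1 x fun M hM => ?_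
    exact hS _ (mem_map_of_mem hM) hx
  eq_top_of_range_le T hT := by
    rw [eq_top_iff, ← hV.1.1.2, span_le]
    rintro _ ⟨M, hM, x, rfl⟩
    exact hT _ (mem_map_of_mem hM) ⟨x, rfl⟩
  exists_not_ker_le H hH := by
    obtain ⟨M, hM, hr, hker⟩ := hV.exists_not_ker_le hH
    exact ⟨_, mem_map_of_mem hM, hr, hker⟩
  exists_not_le_range L hL := by
    obtain ⟨M, hM, hr, hrange⟩ := hV.exists_not_le_range hL
    exact ⟨_, mem_map_of_mem hM, hr, hrange⟩

end Primitive

end Matrices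

theorem primitive_upper_rank_two_implies_three_by_three_general {K : Type*} [Field K] {n p : ℕ}
    (V : Submodule K (Matrix (Fin n) (Fin p) K)) (hprim : Primitive K V) (hurk : urk V = 2) :
    n = 3 ∧ p = 3 := by
  have hspace := hprim.isPrimitiveSpace
  rw [hurk] at hspace
  simpa only [Module.finrank_fin_fun, and_comm] using hspace.finrank_eq_three

theorem primitive_upper_rank_two_implies_three_by_three {n p : ℕ}
    (V : Submodule (ZMod 2) (Matrix (Fin n) (Fin p) (ZMod 2)))
    (hprim : Primitive (ZMod 2) V) (hurk : urk V = 2) :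
    n = 3 ∧ p = 3 :=
  primitive_upper_rank_two_implies_three_by_three_general V hprim hurk
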